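/- Let Y be a Banach space, A a nonempty bounded, closed, convex subset of Y, and (ζ, ρ) a complete metric space. Let C : A → ζ be a compact mapping, and let T : A × closure(C(A)) → A be a continuous mapping that is also a Kannan type equicontraction mapping. Then the equation T(u, C(u)) = u has a solution u ∈ A. -/

import Mathlib

/-!
For each parameter `v` the Kannan map `T(·, v)` has exactly one fixed point `R v` in `A`, the limit
of its iterates. The estimate `dist x y ≤ (1 + k) * dist (f y) y`, for a fixed point `x` of a Kannan
map `f`, is applied to `f = T(·, w)`, `x = R w` and `y = R v`: it bounds `dist (R w) (R v)` by a
quantity that tends to zero as `w → v`, so `R` is continuous. Hence `R ∘ C` is a continuous self-map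
of `A` with values in a compact set, and a fixed point of it, which exists by Schauder's theorem,
solves `T(u, C(u)) = u`.

Schauder's theorem reduces to Brouwer's through partitions of unity subordinate to coverings by
small balls. Brouwer's theorem rests on the argument of Milnor and Rogers. If `h` is `C¹` and
vanishes on the boundary of a compact convex set `s`, then `x ↦ x + t • h x` is a bijection of `s`
for small `t`, so the integral over `s` of its Jacobian determinant, a polynomial in `t`, is the
volume of `s` near `t = 0` and therefore also at `t = 1`. For `h = f - id`, where `f` is a `C¹`
retraction of a ball onto its boundary sphere, the determinant at `t = 1` vanishes identically,
which is absurd.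
-/

open Filter Function Metric MeasureTheory Module Set
open scoped NNReal Polynomial Topology

section Polynomial

open Polynomial

theorem exists_polynomial_natDegree_le_eval_eq_det_id_add_smul {R M : Type*} [CommRing R]
    [Nontrivial R] [AddCommGroup M] [Module R M] [Module.Free R M] [Module.Finite R M]
    (f : M →ₗ[R] M) :
    ∃ p : R[X], p.natDegree ≤ finrank R M ∧
      ∀ t : R, p.eval t = LinearMap.det (LinearMap.id + t • f) := by
  let b := finBasis R M
  let A := LinearMap.toMatrix b b f
  refine ⟨Matrix.det ((X : R[X]) • A.map C + (1 : Matrix _ _ R).map C), ?_, fun t ↦ ?_⟩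
  · simpa using natDegree_det_X_add_C_le A 1
  · rw [← LinearMap.det_toMatrix b, map_add, map_smul, LinearMap.toMatrix_id,
      ← coe_evalRingHom, RingHom.map_det]
    congr 1
    ext i j
    simp only [A, Matrix.add_apply, Matrix.smul_apply, Matrix.map_apply, Matrix.one_apply,
      RingHom.mapMatrix_apply, coe_evalRingHom, smul_eq_mul, eval_add, eval_mul, eval_X, eval_C]
    exact add_comm _ _

theorem exists_polynomial_eval_eq_integral {α : Type*} [MeasurableSpace α] {μ : Measure α}
    {p : α → ℝ[X]} {n : ℕ} (hp_deg : ∀ x, (p x).natDegree ≤ n)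
    (hp_int : ∀ t, Integrable (fun x ↦ (p x).eval t) μ) :
    ∃ q : ℝ[X], ∀ t, q.eval t = ∫ x, (p x).eval t ∂μ := by
  let nodes := Finset.range (n + 1)
  let v : ℕ → ℝ := Nat.cast
  have p_eq (x : α) : p x = Lagrange.interpolate nodes v fun i ↦ (p x).eval (v i) := by
    refine Lagrange.eq_interpolate Nat.cast_injective.injOn ?_
    rw [Finset.card_range]
    exact degree_le_natDegree.trans_lt (mod_cast Nat.lt_succ_of_le (hp_deg x))
  refine ⟨Lagrange.interpolate nodes v fun i ↦ ∫ x, (p x).eval (v i) ∂μ, fun t ↦ ?_⟩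
  calc _ = ∑ i ∈ nodes, ∫ x, (p x).eval (v i) * (Lagrange.basis nodes v i).eval t ∂μ := by
        simp only [Lagrange.interpolate_apply, eval_finsetSum, eval_mul, eval_C,
          integral_mul_const]
    _ = ∫ x, ∑ i ∈ nodes, (p x).eval (v i) * (Lagrange.basis nodes v i).eval t ∂μ :=
        (integral_finsetSum _ fun i _ ↦ (hp_int (v i)).mul_const _).symm
    _ = ∫ x, (p x).eval t ∂μ := by
        congr with x
        conv_rhs => rw [p_eq x]
        simp only [Lagrange.interpolate_apply, eval_finsetSum, eval_mul, eval_C]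

end Polynomial

section Bijective

theorem nonempty_inter_frontier_of_isPreconnected {X : Type*} [TopologicalSpace X] {s t : Set X}
    (ht : IsPreconnected t) (hts : (t ∩ s).Nonempty) (hts' : (t ∩ sᶜ).Nonempty) :
    (t ∩ frontier s).Nonempty := by
  rw [frontier_eq_closure_inter_closure]
  refine isPreconnected_closed_iff.1 ht (closure s) (closure sᶜ) isClosed_closure isClosed_closure
    (fun z _ ↦ ?_) (hts.mono ?_) (hts'.mono ?_)
  · exact (em (z ∈ s)).imp (fun h ↦ subset_closure h) fun h ↦ subset_closure h
  · exact inter_subset_inter_right t subset_closure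
  · exact inter_subset_inter_right t subset_closure

variable {E : Type*} [NormedAddCommGroup E]

theorem bijective_id_add_of_lipschitzWith [CompleteSpace E] {K : ℝ≥0} (hK : K < 1) {u : E → E}
    (hu : LipschitzWith K u) : Bijective fun x ↦ x + u x := by
  have contracting (y : E) : ContractingWith K fun x ↦ y - u x :=
    ⟨hK, LipschitzWith.of_dist_le_mul fun a b ↦ by
      simpa only [dist_sub_left] using hu.dist_le_mul a b⟩
  have solves_iff (x y : E) : x + u x = y ↔ IsFixedPt (fun x ↦ y - u x) x := by
    rw [IsFixedPt, sub_eq_iff_eq_add, eq_comm]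
  refine ⟨fun a b hab ↦ ?_, fun y ↦ ⟨(contracting y).fixedPoint, ?_⟩⟩
  · exact (contracting _).fixedPoint_unique' ((solves_iff a _).1 hab) ((solves_iff b _).1 rfl)
  · exact (solves_iff _ y).2 (contracting y).fixedPoint_isFixedPt

theorem bijOn_id_add_of_eqOn_zero_compl {u : E → E} {s : Set E}
    (hbij : Bijective fun x ↦ x + u x) (hu : EqOn u 0 sᶜ) : BijOn (fun x ↦ x + u x) s s := by
  have fixes_compl : BijOn (fun x ↦ x + u x) sᶜ sᶜ :=
    (bijOn_id sᶜ).congr fun x hx ↦ by simp [hu hx]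
  simpa only [compl_compl] using fixes_compl.compl hbij

variable [NormedSpace ℝ E]

theorem lipschitzWith_indicator_of_eqOn_zero_frontier {F : Type*} [SeminormedAddCommGroup F]
    {s : Set E} (hs : IsClosed s) {f : E → F} {K : ℝ≥0} (hf : LipschitzOnWith K f s)
    (hf0 : EqOn f 0 (frontier s)) : LipschitzWith K (s.indicator f) := by
  have inside_outside {x y : E} (hx : x ∈ s) (hy : y ∉ s) :
      dist (s.indicator f x) (s.indicator f y) ≤ K * dist x y := by
    obtain ⟨z, hz, hzs⟩ : (segment ℝ x y ∩ frontier s).Nonempty :=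
      nonempty_inter_frontier_of_isPreconnected (convex_segment x y).isPreconnected
        ⟨x, left_mem_segment ℝ x y, hx⟩ ⟨y, right_mem_segment ℝ x y, hy⟩
    calc dist (s.indicator f x) (s.indicator f y) = dist (f x) (f z) := by
          simp [hx, hy, hf0 hzs]
      _ ≤ K * dist x z := hf.dist_le_mul x hx z (hs.frontier_subset hzs)
      _ ≤ K * dist x y := by
          gcongr
          linarith [dist_add_dist_of_mem_segment hz, dist_nonneg (x := z) (y := y)]
  refine LipschitzWith.of_dist_le_mul fun x y ↦ ?_
  by_cases hx : x ∈ s <;> by_cases hy : y ∈ s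
  · simpa only [indicator_of_mem hx, indicator_of_mem hy] using hf.dist_le_mul x hx y hy
  · exact inside_outside hx hy
  · simpa only [dist_comm] using inside_outside hy hx
  · simp only [indicator_of_notMem hx, indicator_of_notMem hy, dist_self]
    positivity

theorem eventually_bijOn_id_add_smul [CompleteSpace E] {s : Set E} (hs : IsClosed s) {h : E → E}
    {K : ℝ≥0} (hh : LipschitzOnWith K h s) (hh0 : EqOn h 0 (frontier s)) :
    ∀ᶠ t : ℝ in 𝓝 0, BijOn (fun x ↦ x + t • h x) s s := by
  have small : ∀ᶠ t : ℝ in 𝓝 0, ‖t‖₊ * K < 1 :=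
    Continuous.tendsto' (by fun_prop) 0 0 (by simp) |>.eventually_lt_const one_pos
  filter_upwards [small] with t ht
  let u : E → E := fun x ↦ t • s.indicator h x
  have u_lipschitz : LipschitzWith (‖t‖₊ * K) u :=
    (lipschitzWith_smul t).comp (lipschitzWith_indicator_of_eqOn_zero_frontier hs hh hh0)
  have u_eq_zero : EqOn u 0 sᶜ := fun x hx ↦ by simp [u, indicator_of_notMem hx]
  refine (bijOn_id_add_of_eqOn_zero_compl (bijective_id_add_of_lipschitzWith ht u_lipschitz)
    u_eq_zero).congr fun x hx ↦ ?_
  simp only [u, indicator_of_mem hx]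

end Bijective

section Volume

variable {E : Type*} [NormedAddCommGroup E] [NormedSpace ℝ E]

theorem eventually_forall_det_id_add_smul_pos {X : Type*} [TopologicalSpace X] {s : Set X}
    (hs : IsCompact s) {M : X → E →L[ℝ] E} (hM : Continuous M) :
    ∀ᶠ t : ℝ in 𝓝 0, ∀ x ∈ s, 0 < (ContinuousLinearMap.id ℝ E + t • M x).det := by
  refine hs.eventually_forall_of_forall_eventually fun x _ ↦ ?_
  have det_continuous :
      Continuous fun z : ℝ × X ↦ (ContinuousLinearMap.id ℝ E + z.1 • M z.2).det :=
    ContinuousLinearMap.continuous_det.comp (by fun_prop)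
  exact det_continuous.continuousAt.eventually_const_lt (by simp [ContinuousLinearMap.det])

variable [FiniteDimensional ℝ E] [MeasurableSpace E] [BorelSpace E] (μ : Measure E)
  [μ.IsAddHaarMeasure]

theorem setIntegral_det_eq_measureReal_of_bijOn {s : Set E} (hs : MeasurableSet s) {f : E → E}
    {f' : E → E →L[ℝ] E} (hf' : ∀ x ∈ s, HasFDerivWithinAt f (f' x) s x) (hf : BijOn f s s)
    (hdet : ∀ x ∈ s, 0 < (f' x).det) : ∫ x in s, (f' x).det ∂μ = μ.real s := by
  calc ∫ x in s, (f' x).det ∂μ = ∫ x in s, |(f' x).det| • (1 : ℝ) ∂μ :=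
        setIntegral_congr_fun hs fun x hx ↦ by simp [abs_of_pos (hdet x hx)]
    _ = ∫ _ in f '' s, (1 : ℝ) ∂μ :=
        (integral_image_eq_integral_abs_det_fderiv_smul μ hs hf' hf.injOn fun _ ↦ 1).symm
    _ = μ.real s := by simp [hf.image_eq]

theorem setIntegral_det_id_add_fderiv_eq_measureReal {s : Set E} (hs : IsCompact s)
    (hs_conv : Convex ℝ s) {h : E → E} (hh : ContDiff ℝ 1 h) (hh0 : EqOn h 0 (frontier s)) :
    ∫ x in s, (ContinuousLinearMap.id ℝ E + fderiv ℝ h x).det ∂μ = μ.real s := by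
  obtain ⟨K, hK⟩ := hh.contDiffOn.exists_lipschitzOnWith one_ne_zero hs_conv hs
  have fderiv_continuous : Continuous (fderiv ℝ h) := hh.continuous_fderiv one_ne_zero
  have hasFDerivAt (t : ℝ) (x : E) :
      HasFDerivAt (fun x ↦ x + t • h x) (ContinuousLinearMap.id ℝ E + t • fderiv ℝ h x) x :=
    (hasFDerivAt_id x).add ((hh.differentiable one_ne_zero x).hasFDerivAt.const_smul t)
  have eventually_eq : ∀ᶠ t : ℝ in 𝓝 0,
      ∫ x in s, (ContinuousLinearMap.id ℝ E + t • fderiv ℝ h x).det ∂μ = μ.real s := by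
    filter_upwards [eventually_bijOn_id_add_smul hs.isClosed hK hh0,
      eventually_forall_det_id_add_smul_pos hs fderiv_continuous] with t hbij hpos
    exact setIntegral_det_eq_measureReal_of_bijOn μ hs.measurableSet
      (fun x _ ↦ (hasFDerivAt t x).hasFDerivWithinAt) hbij hpos
  choose p hp_deg hp_eval using fun x ↦
    exists_polynomial_natDegree_le_eval_eq_det_id_add_smul (fderiv ℝ h x : E →ₗ[ℝ] E)
  have p_eval (t : ℝ) (x : E) :
      (p x).eval t = (ContinuousLinearMap.id ℝ E + t • fderiv ℝ h x).det := hp_eval x t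
  have integrable (t : ℝ) : IntegrableOn (fun x ↦ (p x).eval t) s μ := by
    simp only [p_eval]
    exact (ContinuousLinearMap.continuous_det.comp (by fun_prop)).continuousOn.integrableOn_compact
      hs
  obtain ⟨q, hq⟩ := exists_polynomial_eval_eq_integral hp_deg integrable
  have q_eq : q = Polynomial.C (μ.real s) := by
    refine Polynomial.eq_of_infinite_eval_eq _ _ (infinite_of_mem_nhds 0 ?_)
    filter_upwards [eventually_eq] with t ht
    simpa only [mem_ofPred_eq, hq, p_eval, Polynomial.eval_C] using ht
  simpa only [hq, p_eval, one_smul, Polynomial.eval_C] using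
    congrArg (Polynomial.eval 1) q_eq

end Volume

theorem exists_isFixedPt_of_forall_exists_dist_lt {X : Type*} [MetricSpace X] {A K : Set X}
    (hK : IsCompact K) (hKA : K ⊆ A) {f : X → X} (hf : ContinuousOn f A) (hfK : MapsTo f A K)
    (happrox : ∀ ε > 0, ∃ x ∈ A, dist (f x) x < ε) : ∃ x ∈ A, IsFixedPt f x := by
  choose u hu hfu using fun n : ℕ ↦ happrox (1 / ((n : ℝ) + 1)) Nat.one_div_pos_of_nat
  obtain ⟨y, hy, φ, hφ, hlim⟩ := hK.tendsto_subseq fun n ↦ hfK (hu n)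
  have dist_tendsto : Tendsto (fun n ↦ dist (f (u n)) (u n)) atTop (𝓝 0) :=
    squeeze_zero (fun _ ↦ dist_nonneg) (fun n ↦ (hfu n).le) tendsto_one_div_add_atTop_nhds_zero_nat
  have u_tendsto : Tendsto (u ∘ φ) atTop (𝓝 y) :=
    (tendsto_iff_of_dist (dist_tendsto.comp hφ.tendsto_atTop)).1 hlim
  have u_tendsto_within : Tendsto (u ∘ φ) atTop (𝓝[A] y) :=
    tendsto_nhdsWithin_iff.2 ⟨u_tendsto, .of_forall fun n ↦ hu (φ n)⟩
  exact ⟨y, hKA hy, tendsto_nhds_unique ((hf y (hKA hy)).tendsto.comp u_tendsto_within) hlim⟩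

section Brouwer

variable {E : Type*} [NormedAddCommGroup E] [InnerProductSpace ℝ E] [FiniteDimensional ℝ E]

theorem det_fderiv_eq_zero_of_norm_eventuallyEq_const {f : E → E} {x : E} {r : ℝ} (hr : r ≠ 0)
    (hf : DifferentiableAt ℝ f x) (hnorm : (‖f ·‖) =ᶠ[𝓝 x] fun _ ↦ r) :
    (fderiv ℝ f x).det = 0 := by
  by_contra hdet
  obtain ⟨w, hw⟩ := (LinearMap.equivOfDetNeZero (fderiv ℝ f x : E →ₗ[ℝ] E) hdet).surjective (f x)
  -- In the direction `w` the derivative of `‖f‖ ^ 2` at `x` is `2 * r ^ 2`, not zero.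
  have norm_sq_const : (fun y ↦ ‖f y‖ ^ 2) =ᶠ[𝓝 x] fun _ ↦ r ^ 2 := hnorm.pow_const 2
  have fderiv_eq_zero := hf.hasFDerivAt.norm_sq.unique
    ((hasFDerivAt_const (r ^ 2) x).congr_of_eventuallyEq norm_sq_const)
  have hw' : fderiv ℝ f x w = f x := hw
  have := DFunLike.congr_fun fderiv_eq_zero w
  simp [hw', hnorm.eq_of_nhds, hr] at this

theorem not_forall_norm_eq_of_contDiff_of_eqOn_sphere {r : ℝ} (hr : 0 < r) {f : E → E}
    (hf : ContDiff ℝ 1 f) (hfix : EqOn f id (sphere 0 r)) : ¬∀ x, ‖f x‖ = r := by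
  intro hnorm
  borelize E
  have f_differentiable : Differentiable ℝ f := hf.differentiable one_ne_zero
  have fderiv_eq (x : E) : ContinuousLinearMap.id ℝ E + fderiv ℝ (f - id) x = fderiv ℝ f x := by
    rw [fderiv_sub (f_differentiable x) differentiableAt_id, fderiv_id, add_sub_cancel]
  have volume_eq := setIntegral_det_id_add_fderiv_eq_measureReal (volume : Measure E)
    (isCompact_closedBall 0 r) (convex_closedBall 0 r) (hf.sub contDiff_id)
    (fun x hx ↦ sub_eq_zero.2 (hfix (frontier_closedBall_subset_sphere hx)))
  have det_eq_zero (x : E) : (fderiv ℝ f x).det = 0 :=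
    det_fderiv_eq_zero_of_norm_eventuallyEq_const hr.ne' (f_differentiable x) (.of_forall hnorm)
  have volume_pos : 0 < (volume : Measure E).real (closedBall 0 r) :=
    ENNReal.toReal_pos (measure_closedBall_pos _ _ hr).ne' measure_closedBall_lt_top.ne
  simp only [← Pi.sub_def, fderiv_eq, det_eq_zero, integral_zero] at volume_eq
  exact volume_pos.ne volume_eq

theorem exists_isFixedPt_of_contDiff_of_norm_le {f : E → E} (hf : ContDiff ℝ 1 f) {R : ℝ}
    (hfR : ∀ x, ‖f x‖ ≤ R) : ∃ x, IsFixedPt f x := by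
  by_contra! hne
  have R_nonneg : 0 ≤ R := (norm_nonneg _).trans (hfR 0)
  let b : ContDiffBump (0 : E) := ⟨R + 1, R + 2, by linarith, by linarith⟩
  let F : E → E := fun x ↦ x - b x • f x
  have F_contDiff : ContDiff ℝ 1 F := contDiff_id.sub (b.contDiff.smul hf)
  have F_ne_zero (x : E) : F x ≠ 0 := by
    intro hx
    have x_eq : x = b x • f x := sub_eq_zero.1 hx
    have norm_x_le : ‖x‖ ≤ R + 1 := by
      calc ‖x‖ = b x * ‖f x‖ := by
            rw [congrArg norm x_eq, norm_smul, Real.norm_of_nonneg b.nonneg]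
        _ ≤ 1 * R := mul_le_mul b.le_one (hfR x) (norm_nonneg _) zero_le_one
        _ ≤ R + 1 := by linarith
    rw [b.one_of_mem_closedBall (mem_closedBall_zero_iff.2 norm_x_le), one_smul] at x_eq
    exact hne x x_eq.symm
  refine not_forall_norm_eq_of_contDiff_of_eqOn_sphere (r := R + 2) (by linarith)
    (f := fun x ↦ ((R + 2) / ‖F x‖) • F x) ?_ (fun x hx ↦ ?_) (fun x ↦ ?_)
  · exact (contDiff_const.div (F_contDiff.norm ℝ F_ne_zero)
      fun x ↦ norm_ne_zero_iff.2 (F_ne_zero x)).smul F_contDiff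
  · have norm_x : ‖x‖ = R + 2 := mem_sphere_zero_iff_norm.1 hx
    have F_x : F x = x := by
      simp only [F, b.zero_of_le_dist (by rw [dist_zero_right, norm_x]), zero_smul, sub_zero]
    simp only [F_x, norm_x, div_self (by linarith : R + 2 ≠ 0), one_smul, id]
  · rw [norm_smul, norm_div, norm_norm, div_mul_cancel₀ _ (norm_ne_zero_iff.2 (F_ne_zero x)),
      Real.norm_of_nonneg (by linarith)]

theorem exists_isFixedPt_of_continuous_of_norm_le {f : E → E}
    (hf : Continuous f) {R : ℝ} (hfR : ∀ x, ‖f x‖ ≤ R) : ∃ x, IsFixedPt f x := by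
  suffices happrox : ∀ ε > 0, ∃ x ∈ univ, dist (f x) x < ε by
    obtain ⟨x, -, hx⟩ := exists_isFixedPt_of_forall_exists_dist_lt (isCompact_closedBall 0 R)
      (subset_univ _) hf.continuousOn (fun x _ ↦ mem_closedBall_zero_iff.2 (hfR x)) happrox
    exact ⟨x, hx⟩
  intro ε hε
  obtain ⟨g, hg, hgf, -⟩ := hf.exists_contDiff_approx 1 continuous_const fun _ ↦ hε
  have norm_g_le (x : E) : ‖g x‖ ≤ R + ε := by
    have := norm_le_norm_add_norm_sub' (g x) (f x)
    have := hgf x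
    rw [dist_eq_norm] at this
    linarith [hfR x]
  obtain ⟨x, hx⟩ := exists_isFixedPt_of_contDiff_of_norm_le hg norm_g_le
  exact ⟨x, mem_univ x, by simpa only [hx.eq, dist_comm] using hgf x⟩

end Brouwer

theorem exists_lipschitzWith_one_retraction_of_convex {E : Type*} [NormedAddCommGroup E]
    [InnerProductSpace ℝ E] {s : Set E} (hne : s.Nonempty) (hs : IsComplete s)
    (hs_conv : Convex ℝ s) :
    ∃ P : E → E, LipschitzWith 1 P ∧ (∀ x, P x ∈ s) ∧ EqOn P id s := by
  choose P hPs hP_min using exists_norm_eq_iInf_of_complete_convex hne hs hs_conv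
  have inner_le (x : E) : ∀ w ∈ s, inner ℝ (x - P x) (w - P x) ≤ 0 :=
    (norm_eq_iInf_iff_real_inner_le_zero hs_conv (hPs x)).1 (hP_min x)
  refine ⟨P, LipschitzWith.of_dist_le_mul fun x y ↦ ?_, hPs, fun x hx ↦ ?_⟩
  · have norm_sq_le : ‖P x - P y‖ ^ 2 ≤ ‖x - y‖ * ‖P x - P y‖ := by
      calc ‖P x - P y‖ ^ 2 ≤ inner ℝ (x - y) (P x - P y) := by
            have hx := inner_le x (P y) (hPs y)
            have hy := inner_le y (P x) (hPs x)
            rw [← real_inner_self_eq_norm_sq]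
            simp only [inner_sub_left, inner_sub_right] at hx hy ⊢
            linarith
        _ ≤ ‖x - y‖ * ‖P x - P y‖ := real_inner_le_norm _ _
    rw [NNReal.coe_one, one_mul, dist_eq_norm, dist_eq_norm]
    nlinarith [norm_nonneg (x - y), norm_nonneg (P x - P y)]
  · have norm_sub_sq_le : inner ℝ (x - P x) (x - P x) ≤ 0 := inner_le x x hx
    exact (sub_eq_zero.1 (real_inner_self_nonpos.1 norm_sub_sq_le)).symm

theorem exists_isFixedPt_of_isCompact_of_convex {E : Type*} [NormedAddCommGroup E]
    [NormedSpace ℝ E] [FiniteDimensional ℝ E] {s : Set E} (hne : s.Nonempty) (hs : IsCompact s)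
    (hs_conv : Convex ℝ s) {f : E → E} (hf : ContinuousOn f s) (hfs : MapsTo f s s) :
    ∃ x ∈ s, IsFixedPt f x := by
  let e := toEuclidean (E := E)
  have image_compact : IsCompact (e '' s) := hs.image e.continuous
  obtain ⟨P, hP, hPs, hP_id⟩ := exists_lipschitzWith_one_retraction_of_convex (hne.image e)
    image_compact.isComplete (hs_conv.linear_image e.toLinearMap)
  have symm_P_mem (y) : e.symm (P y) ∈ s := by
    obtain ⟨x, hx, hxy⟩ := hPs y
    rwa [← hxy, e.symm_apply_apply]
  have continuous : Continuous fun y ↦ e (f (e.symm (P y))) :=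
    e.continuous.comp (hf.comp_continuous (e.symm.continuous.comp hP.continuous) symm_P_mem)
  obtain ⟨R, hR⟩ := image_compact.isBounded.exists_norm_le
  obtain ⟨y, hy⟩ := exists_isFixedPt_of_continuous_of_norm_le continuous
    fun y ↦ hR _ (mem_image_of_mem e (hfs (symm_P_mem y)))
  have P_y : P y = y := hP_id (hy ▸ mem_image_of_mem e (hfs (symm_P_mem y)))
  refine ⟨e.symm y, P_y ▸ symm_P_mem y, e.injective ?_⟩
  simpa only [P_y, e.apply_symm_apply] using hy.eq

section Schauder

variable {E : Type*} [NormedAddCommGroup E] [NormedSpace ℝ E] {A K : Set E} {f : E → E}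

theorem exists_dist_lt_of_mapsTo_isCompact (hA : A.Nonempty) (hA_conv : Convex ℝ A)
    (hK : IsCompact K) (hKA : K ⊆ A) (hf : ContinuousOn f A) (hfK : MapsTo f A K) {ε : ℝ}
    (hε : 0 < ε) : ∃ x ∈ A, dist (f x) x < ε := by
  obtain ⟨t, htK, hcover⟩ := hK.elim_nhds_subcover (ball · ε) fun x _ ↦ ball_mem_nhds x hε
  obtain ⟨ρ, hρ⟩ := PartitionOfUnity.exists_isSubordinate hK.isClosed (fun i : t ↦ ball (i : E) ε)
    (fun _ ↦ isOpen_ball) (by rwa [iUnion_subtype])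
  let Φ : (t → ℝ) → E := fun p ↦ ∑ i, p i • (i : E)
  have Φ_mem : MapsTo Φ (stdSimplex ℝ t) A := fun p hp ↦
    hA_conv.sum_mem (fun i _ ↦ hp.1 i) hp.2 fun i _ ↦ hKA (htK i i.2)
  let g : (t → ℝ) → t → ℝ := fun p i ↦ ρ i (f (Φ p))
  have g_continuousOn : ContinuousOn g (stdSimplex ℝ t) :=
    continuousOn_pi.2 fun i ↦ (ρ i).continuous.comp_continuousOn
      (hf.comp (by fun_prop) Φ_mem)
  have g_mapsTo : MapsTo g (stdSimplex ℝ t) (stdSimplex ℝ t) := fun p hp ↦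
    ⟨fun i ↦ ρ.nonneg i _, by
      rw [← finsum_eq_sum_of_fintype]
      exact ρ.sum_eq_one (hfK (Φ_mem hp))⟩
  have simplex_nonempty : (stdSimplex ℝ t).Nonempty := by
    obtain ⟨a, ha⟩ := hA
    obtain ⟨i, hi, -⟩ := mem_iUnion₂.1 (hcover (hfK ha))
    classical
    exact ⟨_, single_mem_stdSimplex ℝ (⟨i, hi⟩ : t)⟩
  obtain ⟨p, hp, hgp⟩ := exists_isFixedPt_of_isCompact_of_convex simplex_nonempty
    (isCompact_stdSimplex ℝ t) (convex_stdSimplex ℝ t) g_continuousOn g_mapsTo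
  refine ⟨Φ p, Φ_mem hp, ?_⟩
  have sum_mem : ∑ᶠ i, ρ i (f (Φ p)) • (i : E) ∈ ball (f (Φ p)) ε :=
    ρ.finsum_smul_mem_convex (g := fun i _ ↦ (i : E)) (hfK (Φ_mem hp))
      (fun i hi ↦ mem_ball_comm.1 (hρ i (subset_closure hi))) (convex_ball _ _)
  have Φ_eq : ∑ᶠ i, ρ i (f (Φ p)) • (i : E) = Φ p := by
    rw [finsum_eq_sum_of_fintype]
    exact congrArg Φ hgp
  rwa [Φ_eq, mem_ball'] at sum_mem

theorem exists_isFixedPt_of_mapsTo_isCompact (hA : A.Nonempty) (hA_conv : Convex ℝ A)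
    (hK : IsCompact K) (hKA : K ⊆ A) (hf : ContinuousOn f A) (hfK : MapsTo f A K) :
    ∃ x ∈ A, IsFixedPt f x :=
  exists_isFixedPt_of_forall_exists_dist_lt hK hKA hf hfK fun _ hε ↦
    exists_dist_lt_of_mapsTo_isCompact hA hA_conv hK hKA hf hfK hε

end Schauder

/-- `f` is a Kannan map on `s` with constant `k`: the displacements `dist (f x) x` and
`dist (f y) y`, rather than `dist x y`, control `dist (f x) (f y)`. -/
def KannanOnWith {X : Type*} [PseudoMetricSpace X] (k : ℝ) (f : X → X) (s : Set X) : Prop :=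
  ∀ x ∈ s, ∀ y ∈ s, dist (f x) (f y) ≤ k * (dist (f x) x + dist (f y) y)

namespace KannanOnWith

section PseudoMetricSpace

variable {X : Type*} [PseudoMetricSpace X] {f : X → X} {s : Set X} {k : ℝ} {x y : X}

theorem dist_apply_apply_le (hf : KannanOnWith k f s) (hk : k < 1) (hx : x ∈ s) (hfx : f x ∈ s) :
    dist (f (f x)) (f x) ≤ k / (1 - k) * dist (f x) x := by
  rw [div_mul_eq_mul_div, le_div_iff₀ (by linarith)]
  linarith [hf (f x) hfx x hx]

theorem dist_le_of_isFixedPt (hf : KannanOnWith k f s) (hx : x ∈ s) (hfx : IsFixedPt f x)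
    (hy : y ∈ s) : dist x y ≤ (1 + k) * dist (f y) y := by
  have dist_x_fy : dist x (f y) ≤ k * dist (f y) y := by
    simpa only [hfx.eq, dist_self, zero_add] using hf x hx y hy
  linarith [dist_triangle x (f y) y]

theorem cauchySeq_iterate (hf : KannanOnWith k f s) (hk₀ : 0 ≤ k) (hk : k < 1 / 2)
    (hfs : MapsTo f s s) (hx : x ∈ s) : CauchySeq fun n ↦ f^[n] x := by
  have ratio_lt_one : k / (1 - k) < 1 := by
    rw [div_lt_one (by linarith)]
    linarith
  refine cauchySeq_of_le_geometric (k / (1 - k)) (dist (f x) x) ratio_lt_one fun n ↦ ?_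
  rw [dist_comm, iterate_succ_apply']
  induction n with
  | zero => simp
  | succ n ih =>
    rw [iterate_succ_apply']
    calc dist (f (f (f^[n] x))) (f (f^[n] x))
        ≤ k / (1 - k) * dist (f (f^[n] x)) (f^[n] x) :=
          hf.dist_apply_apply_le (by linarith) (hfs.iterate n hx) (hfs (hfs.iterate n hx))
      _ ≤ k / (1 - k) * (dist (f x) x * (k / (1 - k)) ^ n) := by
          gcongr
          exact div_nonneg hk₀ (by linarith)
      _ = dist (f x) x * (k / (1 - k)) ^ (n + 1) := by ring

theorem continuousOn_of_isFixedPt {Z : Type*} [TopologicalSpace Z] {T : X → Z → X} {Q : Set Z}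
    (hT_cont : ∀ u ∈ s, ContinuousOn (T u) Q) (hT : ∀ v ∈ Q, KannanOnWith k (T · v) s) {R : Z → X}
    (hRs : MapsTo R Q s) (hR : ∀ v ∈ Q, IsFixedPt (T · v) (R v)) : ContinuousOn R Q := by
  intro v hv
  have bound_tendsto : Tendsto (fun w ↦ (1 + k) * dist (T (R v) w) (R v)) (𝓝[Q] v) (𝓝 0) := by
    have := ((hT_cont (R v) (hRs hv) v hv).dist (tendsto_const_nhds (x := R v))).const_mul (1 + k)
    simpa only [(hR v hv).eq, dist_self, mul_zero] using this
  refine tendsto_iff_dist_tendsto_zero.2 (squeeze_zero' (.of_forall fun _ ↦ dist_nonneg) ?_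
    bound_tendsto)
  filter_upwards [self_mem_nhdsWithin] with w hw
  exact (hT w hw).dist_le_of_isFixedPt (hRs hw) (hR w hw) (hRs hv)

end PseudoMetricSpace

variable {X : Type*} [MetricSpace X] {f : X → X} {s : Set X} {k : ℝ}

theorem isFixedPt_of_tendsto_iterate {x y : X} (hf : KannanOnWith k f s) (hk : k < 1)
    (hfs : MapsTo f s s) (hx : x ∈ s) (hy : y ∈ s) (hxy : Tendsto (fun n ↦ f^[n] x) atTop (𝓝 y)) :
    IsFixedPt f y := by
  have tendsto_succ : Tendsto (fun n ↦ f^[n + 1] x) atTop (𝓝 y) :=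
    hxy.comp (tendsto_add_atTop_nat 1)
  have dist_le : dist (f y) y ≤ k * (dist (f y) y + dist y y) := by
    refine le_of_tendsto_of_tendsto' (tendsto_const_nhds.dist tendsto_succ)
      ((tendsto_const_nhds.add (tendsto_succ.dist hxy)).const_mul k) fun n ↦ ?_
    rw [iterate_succ_apply']
    exact hf y hy _ (hfs.iterate n hx)
  rw [dist_self, add_zero] at dist_le
  exact dist_le_zero.1 (by nlinarith [dist_nonneg (x := f y) (y := y)])

theorem exists_isFixedPt (hf : KannanOnWith k f s) (hk₀ : 0 ≤ k) (hk : k < 1 / 2)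
    (hs : IsComplete s) (hne : s.Nonempty) (hfs : MapsTo f s s) : ∃ x ∈ s, IsFixedPt f x := by
  obtain ⟨x, hx⟩ := hne
  obtain ⟨y, hy, hxy⟩ := cauchySeq_tendsto_of_isComplete hs (fun n ↦ hfs.iterate n hx)
    (hf.cauchySeq_iterate hk₀ hk hfs hx)
  exact ⟨y, hy, hf.isFixedPt_of_tendsto_iterate (by linarith) hfs hx hy hxy⟩

end KannanOnWith

theorem kannan_equicontraction_krasnoselskii_continuous_general {Y : Type*} [NormedAddCommGroup Y]
    [NormedSpace ℝ Y] {ζ : Type*} [TopologicalSpace ζ] {A : Set Y} (hA_ne : A.Nonempty)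
    (hA : IsComplete A) (hA_conv : Convex ℝ A) {Q : Set ζ} (hQ : IsCompact Q) {C : Y → ζ}
    (hC : ContinuousOn C A) (hCQ : MapsTo C A Q) {T : Y → ζ → Y}
    (hT_maps : ∀ v ∈ Q, MapsTo (T · v) A A) (hT_cont : ∀ u ∈ A, ContinuousOn (T u) Q) {k : ℝ}
    (hk₀ : 0 ≤ k) (hk : k < 1 / 2) (hT : ∀ v ∈ Q, KannanOnWith k (T · v) A) :
    ∃ u ∈ A, T u (C u) = u := by
  choose! R hRA hR using fun v hv ↦ (hT v hv).exists_isFixedPt hk₀ hk hA hA_ne (hT_maps v hv)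
  have R_continuousOn : ContinuousOn R Q :=
    KannanOnWith.continuousOn_of_isFixedPt hT_cont hT hRA hR
  obtain ⟨u, hu, hRCu⟩ := exists_isFixedPt_of_mapsTo_isCompact hA_ne hA_conv
    (hQ.image_of_continuousOn R_continuousOn) (image_subset_iff.2 hRA)
    (R_continuousOn.comp hC hCQ) ((mapsTo_image R Q).comp hCQ)
  have T_fixes : IsFixedPt (T · (C u)) (R (C u)) := hR (C u) (hCQ hu)
  rw [show R (C u) = u from hRCu] at T_fixes
  exact ⟨u, hu, T_fixes⟩

/-- Corollary: Krasnosel'skii-type theorem for continuous Kannan type equicontraction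
mappings. -/
theorem kannan_equicontraction_krasnoselskii_continuous
    {Y : Type*} [NormedAddCommGroup Y] [NormedSpace ℝ Y] [CompleteSpace Y]
    {ζ : Type*} [MetricSpace ζ] [CompleteSpace ζ]
    (A : Set Y) (hA_ne : A.Nonempty) (hA_bdd : Bornology.IsBounded A)
    (hA_cl : IsClosed A) (hA_cv : Convex ℝ A)
    (C : Y → ζ)
    (hC_cont : ContinuousOn C A)
    (hC_cpt : IsCompact (closure (C '' A)))
    (T : Y → ζ → Y)
    (hT_maps : ∀ u ∈ A, ∀ v ∈ closure (C '' A), T u v ∈ A)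
    (hT_cont : ContinuousOn (fun p : Y × ζ => T p.1 p.2) (A ×ˢ closure (C '' A)))
    (hT_kannan : ∃ k : ℝ, 0 ≤ k ∧ k < 1 / 2 ∧
      ∀ u₁ ∈ A, ∀ u₂ ∈ A, ∀ v ∈ closure (C '' A),
        ‖T u₁ v - T u₂ v‖ ≤ k * (‖T u₁ v - u₁‖ + ‖T u₂ v - u₂‖)) :
    ∃ u ∈ A, T u (C u) = u := by
  obtain ⟨k, hk₀, hk, hT⟩ := hT_kannan
  exact kannan_equicontraction_krasnoselskii_continuous_general hA_ne hA_cl.isComplete hA_cv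
    hC_cpt hC_cont (fun u hu ↦ subset_closure (mem_image_of_mem C hu))
    (fun v hv u hu ↦ hT_maps u hu v hv)
    (fun u hu ↦ hT_cont.comp (f := (u, ·)) (by fun_prop) fun v hv ↦ ⟨hu, hv⟩) hk₀ hk
    (fun v hv u₁ hu₁ u₂ hu₂ ↦ by simpa only [dist_eq_norm] using hT u₁ hu₁ u₂ hu₂ v hv)
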